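/- For every real J ≥ 0, all eigenvalues of the symmetric real matrix M = −I + (J/2^(K+1)) A are strictly negative if and only if J < 2. Hence the incoherent state loses stability precisely at the critical coupling J_c = 2, independently of the even rank parameter K. -/

import Mathlib

/-- The value ±1 associated to a Boolean sign. -/
noncomputable def sgn (b : Bool) : ℝ := if b then 1 else -1

/-- The `2^K × 2^K` matrix with rows and columns indexed by sign vectors
`u, v ∈ {−1,1}^K` (encoded as `Fin K → Bool`), with entries
`A_{u,v} = Σ_{m=1}^K (−1)^m u_m v_m`. -/
noncomputable def volcanoA (K : ℕ) : Matrix (Fin K → Bool) (Fin K → Bool) ℝ :=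
  Matrix.of fun u v => ∑ m : Fin K, (-1 : ℝ) ^ ((m : ℕ) + 1) * sgn (u m) * sgn (v m)


theorem sgn_mul_self (b : Bool) : sgn b * sgn b = 1 := by
  cases b <;> simp [sgn]

theorem sgn_not (b : Bool) : sgn (!b) = - sgn b := by
  cases b <;> simp [sgn]

theorem sgn_orth (K : ℕ) (m n : Fin K) :
    ∑ v : Fin K → Bool, sgn (v m) * sgn (v n) = if m = n then (2 : ℝ) ^ K else 0 := by
  split_ifs with h
  · subst h
    simp [sgn_mul_self]
  · have hinv : Function.Involutive
        (fun v : Fin K → Bool => Function.update v m (!(v m))) := by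
      intro v
      simp
    have key := Equiv.sum_comp (Function.Involutive.toPerm _ hinv)
      (fun v : Fin K → Bool => sgn (v m) * sgn (v n))
    have h2 : ∀ v : Fin K → Bool,
        sgn ((Function.Involutive.toPerm _ hinv v) m) * sgn ((Function.Involutive.toPerm _ hinv v) n) = -(sgn (v m) * sgn (v n)) := by
      intro v
      have hn : n ≠ m := fun e => h e.symm
      simp [Function.Involutive.toPerm, Function.update_of_ne hn, sgn_not]
    simp only [h2, Finset.sum_neg_distrib] at key
    linarith

theorem volcanoA_mulVec (K : ℕ) (x : (Fin K → Bool) → ℝ) :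
    (volcanoA K).mulVec x = fun u => ∑ m : Fin K,
      ((-1 : ℝ) ^ ((m : ℕ) + 1) * ∑ v, sgn (v m) * x v) * sgn (u m) := by
  funext u
  simp only [Matrix.mulVec, dotProduct, volcanoA, Matrix.of_apply, Finset.sum_mul,
    Finset.mul_sum]
  rw [Finset.sum_comm]
  refine Finset.sum_congr rfl fun m _ => Finset.sum_congr rfl fun v _ => ?_
  ring

theorem volcanoA_comb (K : ℕ) (c : Fin K → ℝ) :
    (volcanoA K).mulVec (fun u => ∑ m, c m * sgn (u m)) = fun u => ∑ m : Fin K,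
      ((-1 : ℝ) ^ ((m : ℕ) + 1) * 2 ^ K * c m) * sgn (u m) := by
  rw [volcanoA_mulVec]
  funext u
  refine Finset.sum_congr rfl fun m _ => ?_
  have : ∑ v : Fin K → Bool, sgn (v m) * ∑ n, c n * sgn (v n) = 2 ^ K * c m := by
    simp only [Finset.mul_sum]
    rw [Finset.sum_comm]
    have : ∀ n, ∑ v : Fin K → Bool, sgn (v m) * (c n * sgn (v n))
        = c n * (if m = n then (2 : ℝ) ^ K else 0) := by
      intro n
      rw [← sgn_orth, Finset.mul_sum]
      exact Finset.sum_congr rfl fun v _ => by ring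
    simp only [this]
    simp [mul_comm]
  rw [this]
  ring

theorem volcanoA_cube (K : ℕ) (x : (Fin K → Bool) → ℝ) :
    (volcanoA K).mulVec ((volcanoA K).mulVec ((volcanoA K).mulVec x)) =
      ((2 : ℝ) ^ K) ^ 2 • (volcanoA K).mulVec x := by
  rw [volcanoA_mulVec K x, volcanoA_comb, volcanoA_comb]
  funext u
  simp only [Pi.smul_apply, smul_eq_mul]
  rw [Finset.mul_sum]
  refine Finset.sum_congr rfl fun m _ => ?_
  have h : ((-1 : ℝ) ^ ((m : ℕ) + 1)) * ((-1 : ℝ) ^ ((m : ℕ) + 1)) = 1 := by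
    rw [← mul_pow]; simp
  linear_combination ((2 : ℝ) ^ K) ^ 2 * ((-1 : ℝ) ^ ((m : ℕ) + 1)) *
    (∑ v, sgn (v m) * x v) * sgn (u m) * h

theorem mem_spectrum_iff_mulVec {ι : Type*} [Fintype ι] [DecidableEq ι]
    (M : Matrix ι ι ℝ) (μ : ℝ) :
    μ ∈ spectrum ℝ M ↔ ∃ x : ι → ℝ, x ≠ 0 ∧ M.mulVec x = μ • x := by
  rw [spectrum.mem_iff, Matrix.isUnit_iff_isUnit_det, isUnit_iff_ne_zero, not_not,
    ← Matrix.exists_mulVec_eq_zero_iff]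
  refine exists_congr fun x => and_congr_right fun _ => ?_
  rw [Matrix.sub_mulVec, sub_eq_zero, Algebra.algebraMap_eq_smul_one, Matrix.smul_mulVec,
    Matrix.one_mulVec, eq_comm]

/-- For every real `J ≥ 0`, all (real) eigenvalues of the symmetric matrix
`M = −I + (J/2^(K+1)) A` are strictly negative if and only if `J < 2`: the
incoherent state loses stability precisely at `J_c = 2`, independently of the
even rank parameter `K`. -/
theorem stmt7 (K : ℕ) (hK : 0 < K) (hKeven : Even K) (J : ℝ) (hJ : 0 ≤ J) :
    (∀ μ ∈ spectrum ℝ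
        (-(1 : Matrix (Fin K → Bool) (Fin K → Bool) ℝ) + (J / 2 ^ (K + 1)) • volcanoA K),
      μ < 0) ↔ J < 2 := by
  have hN : (0 : ℝ) < 2 ^ K := by positivity
  constructor
  · intro H
    have hK2 : 1 < K := by
      rcases hKeven with ⟨k, hk⟩
      omega
    have hm := volcanoA_comb K (Pi.single (⟨1, hK2⟩ : Fin K) (1 : ℝ))
    have := H (-1 + J / 2) ((mem_spectrum_iff_mulVec _ _).2
      ⟨fun u => ∑ m, (Pi.single (⟨1, hK2⟩ : Fin K) (1 : ℝ) : Fin K → ℝ) m * sgn (u m), ?_, ?_⟩)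
    · linarith
    · intro h
      have := congrFun h (fun _ => true)
      simp [sgn] at this
    · rw [Matrix.add_mulVec, Matrix.neg_mulVec, Matrix.one_mulVec, Matrix.smul_mulVec, hm]
      funext u
      simp [Pi.single_apply]
      field_simp
      ring
  · intro hJ2 μ hμ
    obtain ⟨x, hx0, hx⟩ := (mem_spectrum_iff_mulVec _ _).1 hμ
    rw [Matrix.add_mulVec, Matrix.neg_mulVec, Matrix.one_mulVec, Matrix.smul_mulVec] at hx
    set c := J / 2 ^ (K + 1) with hc
    have h1 : c • (volcanoA K).mulVec x = (μ + 1) • x := by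
      rw [add_smul, one_smul, ← hx]; abel
    have h2 : c ^ 3 • (volcanoA K).mulVec ((volcanoA K).mulVec ((volcanoA K).mulVec x))
        = (μ + 1) ^ 3 • x := by
      have : c ^ 3 • (volcanoA K).mulVec ((volcanoA K).mulVec ((volcanoA K).mulVec x))
        = c • (volcanoA K).mulVec (c • (volcanoA K).mulVec (c • (volcanoA K).mulVec x)) := by
        simp only [Matrix.mulVec_smul, smul_smul]
        congr 1
        ring
      rw [this]
      rw [h1, Matrix.mulVec_smul _ (μ + 1) x, smul_comm c (μ + 1), h1, smul_smul, Matrix.mulVec_smul,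
        smul_comm c, h1, smul_smul]
      congr 1
      ring
    have hcN : c * 2 ^ K = J / 2 := by
      rw [hc, pow_succ]; field_simp
    rw [volcanoA_cube, smul_smul,
      show c ^ 3 * ((2 : ℝ) ^ K) ^ 2 = (J / 2) ^ 2 * c by rw [← hcN]; ring,
      mul_smul, h1, smul_smul] at h2
    have h3 : (J / 2) ^ 2 * (μ + 1) = (μ + 1) ^ 3 := smul_left_injective ℝ hx0 h2
    by_contra hneg
    have hp : 0 < μ + 1 := by linarith
    have h4 : (J / 2) ^ 2 = (μ + 1) ^ 2 := by
      apply mul_right_cancel₀ hp.ne'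
      rw [h3]; ring
    nlinarith
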